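/- Let E be a real inner product space and let n be a positive integer. Let Φ : E → (Fin n → ℝ) be a map whose output always has all coordinates in [0,1]. Let f, g : (Fin n → ℝ) → ℝ both be entry-wise concave on the unit cube, with f(X) ≥ 0 for every binary vector X ∈ {0,1}ⁿ, and with g(X) = 0 or g(X) ≥ 1 for every binary vector X ∈ {0,1}ⁿ. Let β > 0 and define the loss ℓ : E → ℝ by ℓ(θ) = f(Φ(θ)) + β·g(Φ(θ)). Fix θ ∈ E, let L > 0, and suppose ℓ is differentiable with base-point L-Lipschitz gradient on the closed ball of radius ‖∇ℓ(θ)‖/L around θ. Let ε satisfy 0 ≤ ε < ‖∇ℓ(θ)‖/L and set Δ = ‖∇ℓ(θ)‖·ε − (L/2)·ε². If ℓ(θ) < β + Δ, then there exists a binary vector X ∈ {0,1}ⁿ with g(X) = 0 and f(X) ≤ ℓ(θ) − Δ. -/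

import Mathlib

/-- `F` is entry-wise concave on the unit cube: for every index `i` and every point `x`
with all coordinates in `[0,1]`, the map `t ↦ F (Function.update x i t)` is concave
on `[0,1]`. -/
def EntrywiseConcave (n : ℕ) (F : (Fin n → ℝ) → ℝ) : Prop :=
  ∀ (i : Fin n) (x : Fin n → ℝ), (∀ j, x j ∈ Set.Icc (0 : ℝ) 1) →
    ConcaveOn ℝ (Set.Icc (0 : ℝ) 1) (fun t => F (Function.update x i t))

theorem round_aux (n : ℕ) (F : (Fin n → ℝ) → ℝ) (hF : EntrywiseConcave n F)
    (x : Fin n → ℝ) (hx : ∀ j, x j ∈ Set.Icc (0 : ℝ) 1) (s : Finset (Fin n)) :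
    ∃ y : Fin n → ℝ, (∀ j, y j ∈ Set.Icc (0 : ℝ) 1) ∧ (∀ i ∈ s, y i = 0 ∨ y i = 1) ∧
      F y ≤ F x := by
  induction s using Finset.induction_on with
  | empty => exact ⟨x, hx, by simp, le_rfl⟩
  | insert a s ha ih =>
    obtain ⟨y, hy, hys, hyF⟩ := ih
    have key := (hF a y hy).min_le_of_mem_Icc (x := 0) (y := 1) (z := y a)
      (by simp) (by simp) (hy a)
    simp only [Function.update_eq_self] at key
    have main : ∀ b : ℝ, (b = 0 ∨ b = 1) → F (Function.update y a b) ≤ F y →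
        ∃ y : Fin n → ℝ, (∀ j, y j ∈ Set.Icc (0 : ℝ) 1) ∧
          (∀ i ∈ insert a s, y i = 0 ∨ y i = 1) ∧ F y ≤ F x := by
      intro b hb hle
      refine ⟨Function.update y a b, ?_, ?_, hle.trans hyF⟩
      · intro j
        by_cases h : j = a
        · subst h
          rcases hb with rfl | rfl <;> simp
        · simpa [h] using hy j
      · intro i hi
        by_cases h : i = a
        · subst h
          simpa using hb
        · simpa [h] using hys i (by simpa [h] using hi)
    rcases min_le_iff.1 key with h | h
    · exact main 0 (Or.inl rfl) h
    · exact main 1 (Or.inr rfl) h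

theorem descent_aux {E : Type*} [NormedAddCommGroup E] [InnerProductSpace ℝ E] [CompleteSpace E]
    (ℓ : E → ℝ) (θ : E) (L : ℝ) (hL : 0 < L)
    (hdiff : ∀ θ' : E, ‖θ' - θ‖ ≤ ‖gradient ℓ θ‖ / L → DifferentiableAt ℝ ℓ θ')
    (hlip : ∀ θ' : E, ‖θ' - θ‖ ≤ ‖gradient ℓ θ‖ / L →
      ‖gradient ℓ θ' - gradient ℓ θ‖ ≤ L * ‖θ' - θ‖)
    (ε : ℝ) (hε0 : 0 ≤ ε) (hε1 : ε < ‖gradient ℓ θ‖ / L) :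
    ∃ θ' : E, ℓ θ' ≤ ℓ θ - (‖gradient ℓ θ‖ * ε - L / 2 * ε ^ 2) := by
  set G := ‖gradient ℓ θ‖ with hG
  have hGpos : 0 < G := by
    have : 0 < G / L := lt_of_le_of_lt hε0 hε1
    exact (div_pos_iff_of_pos_right hL).1 this
  obtain ⟨u, hu⟩ : ∃ u : E, u = -(G⁻¹ • gradient ℓ θ) := ⟨_, rfl⟩
  have hun : ‖u‖ = 1 := by
    rw [hu, norm_neg, norm_smul, ← hG, Real.norm_eq_abs, abs_of_pos (inv_pos.2 hGpos)]
    field_simp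
  have hug : inner ℝ (gradient ℓ θ) u = -G := by
    rw [hu, inner_neg_right, inner_smul_right, real_inner_self_eq_norm_sq, ← hG]
    field_simp
  have hdist : ∀ t ∈ Set.Icc (0:ℝ) ε, ‖(θ + t • u) - θ‖ = t := by
    intro t ht
    rw [add_sub_cancel_left, norm_smul, hun, Real.norm_eq_abs, abs_of_nonneg ht.1, mul_one]
  have hder : ∀ t ∈ Set.Icc (0:ℝ) ε, HasDerivAt
      (fun t : ℝ => ℓ (θ + t • u) + G * t - L / 2 * t ^ 2)
      (inner ℝ (gradient ℓ (θ + t • u)) u + G - L * t) t := by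
    intro t ht
    have h1 : HasFDerivAt ℓ _ (θ + t • u) :=
      (hdiff (θ + t • u) (by rw [hdist t ht]; linarith [ht.2])).hasGradientAt.hasFDerivAt
    have h2 : HasDerivAt (fun t : ℝ => θ + t • u) u t := by
      simpa using ((hasDerivAt_id t).smul_const u).const_add θ
    have h3 := h1.comp_hasDerivAt t h2
    have h4 := (h3.add ((hasDerivAt_id t).const_mul G)).sub
      (((hasDerivAt_id t).pow 2).const_mul (L / 2))
    refine (h4.congr_deriv ?_)
    simp
    ring
  have hanti : AntitoneOn (fun t : ℝ => ℓ (θ + t • u) + G * t - L / 2 * t ^ 2)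
      (Set.Icc 0 ε) := by
    apply antitoneOn_of_deriv_nonpos (convex_Icc 0 ε)
    · exact fun t ht => (hder t ht).continuousAt.continuousWithinAt
    · exact fun t ht => (hder t (interior_subset ht)).differentiableAt.differentiableWithinAt
    · intro t ht
      have ht := interior_subset ht
      rw [(hder t ht).deriv]
      have h1 := hlip (θ + t • u) (by rw [hdist t ht]; linarith [ht.2])
      rw [hdist t ht] at h1
      have h2 := real_inner_le_norm (gradient ℓ (θ + t • u) - gradient ℓ θ) u
      rw [hun, mul_one, inner_sub_left, hug] at h2
      linarith
  have := hanti (Set.left_mem_Icc.2 hε0) (Set.right_mem_Icc.2 hε0) hε0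
  refine ⟨θ + ε • u, ?_⟩
  simp at this
  linarith

theorem performance_guarantee_11
    {E : Type*} [NormedAddCommGroup E] [InnerProductSpace ℝ E] [CompleteSpace E]
    (n : ℕ) (hn : 0 < n) (Φ : E → Fin n → ℝ)
    (hΦ : ∀ (θ : E) (i : Fin n), Φ θ i ∈ Set.Icc (0 : ℝ) 1)
    (f g : (Fin n → ℝ) → ℝ)
    (hf : EntrywiseConcave n f) (hg : EntrywiseConcave n g)
    (hf0 : ∀ X : Fin n → ℝ, (∀ i, X i = 0 ∨ X i = 1) → 0 ≤ f X)
    (hg01 : ∀ X : Fin n → ℝ, (∀ i, X i = 0 ∨ X i = 1) → g X = 0 ∨ 1 ≤ g X)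
    (β : ℝ) (hβ : 0 < β)
    (ℓ : E → ℝ) (hℓ : ∀ θ, ℓ θ = f (Φ θ) + β * g (Φ θ))
    (θ : E) (L : ℝ) (hL : 0 < L)
    (hdiff : ∀ θ' : E, ‖θ' - θ‖ ≤ ‖gradient ℓ θ‖ / L → DifferentiableAt ℝ ℓ θ')
    (hlip : ∀ θ' : E, ‖θ' - θ‖ ≤ ‖gradient ℓ θ‖ / L →
      ‖gradient ℓ θ' - gradient ℓ θ‖ ≤ L * ‖θ' - θ‖)
    (ε : ℝ) (hε0 : 0 ≤ ε) (hε1 : ε < ‖gradient ℓ θ‖ / L)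
    (Δ : ℝ) (hΔ : Δ = ‖gradient ℓ θ‖ * ε - L / 2 * ε ^ 2)
    (hloss : ℓ θ < β + Δ) :
    ∃ X : Fin n → ℝ, (∀ i, X i = 0 ∨ X i = 1) ∧ g X = 0 ∧ f X ≤ ℓ θ - Δ := by
  obtain ⟨θ', hθ'⟩ := descent_aux ℓ θ L hL hdiff hlip ε hε0 hε1
  rw [← hΔ] at hθ'
  have hF : EntrywiseConcave n (fun x => f x + β * g x) := fun i x hx =>
    (hf i x hx).add ((hg i x hx).smul hβ.le)
  obtain ⟨X, -, hX, hle⟩ := round_aux n _ hF (Φ θ') (hΦ θ') Finset.univ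
  have hX : ∀ i, X i = 0 ∨ X i = 1 := fun i => hX i (Finset.mem_univ i)
  simp only [← hℓ] at hle
  have h0 := hf0 X hX
  rcases hg01 X hX with h | h
  · exact ⟨X, hX, h, by rw [h] at hle; linarith⟩
  · exfalso
    nlinarith
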